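/- arXiv:1206.3684 — 3 statements merged into one kernel-verified Lean document; each statement's English description precedes it below -/
import Mathlib

section
/- Let 0 < s < 1. For all n, m ∈ ℕ, ∫_{ℝ²} H_n(x+iy) · conj(H_m(x+iy)) · exp(−(1−s)x² − (1/s − 1)y²) dx dy = δ_{nm} · b_n(s), where δ_{nm} is the Kronecker delta. -/
open Polynomial MeasureTheory Real

/-- The physicists' Hermite polynomials: `H 0 = 1`, `H (n+1) = 2X * H n - (H n)'`. -/
noncomputable def physHermite : ℕ → Polynomial ℝ
  | 0 => 1
  | n + 1 => 2 * Polynomial.X * physHermite n - Polynomial.derivative (physHermite n)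

/-- The normalization constant `b_n(s) = (π√s/(1−s)) (2(1+s)/(1−s))^n n!`. -/
noncomputable def bn (s : ℝ) (n : ℕ) : ℝ :=
  Real.pi * Real.sqrt s / (1 - s) * (2 * (1 + s) / (1 - s)) ^ n * n.factorial

noncomputable def cw (a b : ℝ) (p : ℝ × ℝ) : ℂ := (Real.exp (-a * p.1 ^ 2 - b * p.2 ^ 2) : ℂ)
noncomputable def cz (p : ℝ × ℝ) : ℂ := (p.1 : ℂ) + p.2 * Complex.I
noncomputable def czb (p : ℝ × ℝ) : ℂ := (p.1 : ℂ) - p.2 * Complex.I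

def Good (F : ℝ × ℝ → ℂ) : Prop :=
  ∀ j k : ℕ, Integrable (fun p : ℝ × ℝ => (p.1 : ℂ) ^ j * (p.2 : ℂ) ^ k * F p)

lemma Good.integrable {F : ℝ × ℝ → ℂ} (h : Good F) : Integrable F := by
  simpa using h 0 0

lemma Good.add {F G : ℝ × ℝ → ℂ} (h : Good F) (h' : Good G) : Good (fun p => F p + G p) := by
  intro j k
  refine ((h j k).add (h' j k)).congr (.of_forall fun p => ?_)
  simp only [Pi.add_apply]
  ring

lemma Good.const_mul {F : ℝ × ℝ → ℂ} (h : Good F) (c : ℂ) : Good (fun p => c * F p) := by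
  intro j k
  refine ((h j k).const_mul c).congr (.of_forall fun p => ?_)
  simp only []
  ring

lemma Good.fst {F : ℝ × ℝ → ℂ} (h : Good F) : Good (fun p => (p.1 : ℂ) * F p) := by
  intro j k
  refine (h (j + 1) k).congr (.of_forall fun p => ?_)
  simp only []
  ring

lemma Good.snd {F : ℝ × ℝ → ℂ} (h : Good F) : Good (fun p => (p.2 : ℂ) * F p) := by
  intro j k
  refine (h j (k + 1)).congr (.of_forall fun p => ?_)
  simp only []
  ring

lemma Good.congr {F G : ℝ × ℝ → ℂ} (h : Good F) (e : ∀ p, F p = G p) : Good G := by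
  have : F = G := funext e
  exact this ▸ h

lemma Good.cz {F : ℝ × ℝ → ℂ} (h : Good F) : Good (fun p => cz p * F p) :=
  (h.fst.add (h.snd.const_mul Complex.I)).congr fun p => by simp only [_root_.cz]; ring

lemma Good.czb {F : ℝ × ℝ → ℂ} (h : Good F) : Good (fun p => czb p * F p) :=
  (h.fst.add (h.snd.const_mul (-Complex.I))).congr fun p => by simp only [_root_.czb]; ring

lemma Good.poly {F : ℝ × ℝ → ℂ} (h : Good F) (u : ℝ × ℝ → ℂ)
    (hu : ∀ G, Good G → Good (fun p => u p * G p)) (P : ℝ[X]) :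
    Good (fun p => aeval (u p) P * F p) := by
  induction P using Polynomial.induction_on' with
  | add P Q hP hQ => exact (hP.add hQ).congr fun p => by simp only [map_add]; ring
  | monomial n c =>
    have : Good (fun p => u p ^ n * F p) := by
      induction n with
      | zero => simpa using h
      | succ n ih => exact (hu _ ih).congr fun p => by ring
    exact (this.const_mul (c : ℂ)).congr fun p => by
      simp only [aeval_monomial, Complex.coe_algebraMap]; ring

lemma int1 (a : ℝ) (ha : 0 < a) (j : ℕ) :
    Integrable (fun x : ℝ => (x : ℂ) ^ j * (Real.exp (-a * x ^ 2) : ℂ)) := by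
  have := integrable_rpow_mul_exp_neg_mul_sq ha (s := j) (by
    have : (0 : ℝ) ≤ j := Nat.cast_nonneg j
    linarith)
  refine this.ofReal.congr (.of_forall fun x => ?_)
  simp

lemma good_cw (a b : ℝ) (ha : 0 < a) (hb : 0 < b) : Good (cw a b) := by
  intro j k
  refine ((int1 a ha j).mul_prod (int1 b hb k)).congr (.of_forall fun p => ?_)
  simp only [cw, sub_eq_add_neg, Real.exp_add, Complex.ofReal_mul, neg_mul]
  ring

noncomputable def cf (a b : ℝ) (P Q : ℝ[X]) (p : ℝ × ℝ) : ℂ :=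
  aeval (cz p) P * (aeval (czb p) Q * cw a b p)

noncomputable def cB (a b : ℝ) (P Q : ℝ[X]) : ℂ := ∫ p : ℝ × ℝ, cf a b P Q p

section
variable {a b : ℝ}

lemma good_cf (ha : 0 < a) (hb : 0 < b) (P Q : ℝ[X]) : Good (cf a b P Q) :=
  ((good_cw a b ha hb).poly czb (fun _ h => h.czb) Q).poly cz (fun _ h => h.cz) P

lemma deriv_x (P Q : ℝ[X]) (x y : ℝ) :
    HasDerivAt (fun x : ℝ => cf a b P Q (x, y))
      (cf a b (derivative P) Q (x, y) + cf a b P (derivative Q) (x, y)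
        + (-2 * a : ℂ) * ((x : ℂ) * cf a b P Q (x, y))) x := by
  have h0 : HasDerivAt (fun x : ℝ => (x : ℂ)) 1 x := Complex.ofRealCLM.hasDerivAt
  have h1 : HasDerivAt (fun x : ℝ => cz (x, y)) 1 x := h0.add_const ((y : ℂ) * Complex.I)
  have h2 : HasDerivAt (fun x : ℝ => czb (x, y)) 1 x := h0.sub_const ((y : ℂ) * Complex.I)
  have h3 := (P.hasDerivAt_aeval (cz (x, y))).comp x h1
  have h4 := (Q.hasDerivAt_aeval (czb (x, y))).comp x h2
  have h5 : HasDerivAt (fun x : ℝ => cw a b (x, y)) ((-2 * a * x : ℂ) * cw a b (x, y)) x := by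
    have : HasDerivAt (fun x : ℝ => Real.exp (-a * x ^ 2 - b * y ^ 2))
        (Real.exp (-a * x ^ 2 - b * y ^ 2) * (-a * (2 * x))) x := by
      simpa using ((((hasDerivAt_id x).pow 2).const_mul (-a)).sub_const (b * y ^ 2)).exp
    refine HasDerivAt.congr_deriv this.ofReal_comp ?_
    simp only [cw]; push_cast; ring
  refine HasDerivAt.congr_deriv (h3.mul (h4.mul h5)) ?_
  simp only [cf, Function.comp, Pi.mul_apply]; ring

lemma deriv_y (P Q : ℝ[X]) (x y : ℝ) :
    HasDerivAt (fun y : ℝ => cf a b P Q (x, y))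
      (Complex.I * cf a b (derivative P) Q (x, y) + (-Complex.I) * cf a b P (derivative Q) (x, y)
        + (-2 * b : ℂ) * ((y : ℂ) * cf a b P Q (x, y))) y := by
  have h0 : HasDerivAt (fun x : ℝ => (x : ℂ)) 1 y := Complex.ofRealCLM.hasDerivAt
  have h1 : HasDerivAt (fun y : ℝ => cz (x, y)) (1 * Complex.I) y :=
    (h0.mul_const Complex.I).const_add (x : ℂ)
  have h2 : HasDerivAt (fun y : ℝ => czb (x, y)) (-(1 * Complex.I)) y :=
    (h0.mul_const Complex.I).const_sub (x : ℂ)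
  have h3 := (P.hasDerivAt_aeval (cz (x, y))).comp y h1
  have h4 := (Q.hasDerivAt_aeval (czb (x, y))).comp y h2
  have h5 : HasDerivAt (fun y : ℝ => cw a b (x, y)) ((-2 * b * y : ℂ) * cw a b (x, y)) y := by
    have : HasDerivAt (fun y : ℝ => Real.exp (-a * x ^ 2 - b * y ^ 2))
        (Real.exp (-a * x ^ 2 - b * y ^ 2) * (-(b * (2 * y)))) y := by
      simpa using ((((hasDerivAt_id y).pow 2).const_mul b).const_sub (-(a * x ^ 2))).exp
    refine HasDerivAt.congr_deriv this.ofReal_comp ?_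
    simp only [cw]; push_cast; ring
  refine HasDerivAt.congr_deriv (h3.mul (h4.mul h5)) ?_
  simp only [cf, Function.comp, Pi.mul_apply]; ring

lemma ibp_x (ha : 0 < a) (hb : 0 < b) (P Q : ℝ[X]) :
    cB a b (derivative P) Q + cB a b P (derivative Q)
      + (-2 * a : ℂ) * ∫ p : ℝ × ℝ, (p.1 : ℂ) * cf a b P Q p = 0 := by
  have g := good_cf ha hb P Q
  have g1 := good_cf ha hb (derivative P) Q
  have g2 := good_cf ha hb P (derivative Q)
  have g3 := (g1.add g2).add (g.fst.const_mul (-2 * a : ℂ))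
  have e : ∫ p : ℝ × ℝ, (cf a b (derivative P) Q p + cf a b P (derivative Q) p
        + (-2 * a : ℂ) * ((p.1 : ℂ) * cf a b P Q p)) = 0 := by
    rw [Measure.volume_eq_prod, integral_prod_symm _ g3.integrable]
    refine integral_eq_zero_of_ae ?_
    filter_upwards [g3.integrable.prod_left_ae, g.integrable.prod_left_ae] with y h1 h2
    exact integral_eq_zero_of_hasDerivAt_of_integrable (fun x => deriv_x P Q x y) h1 h2
  rw [integral_add (g1.add g2).integrable (g.fst.const_mul _).integrable,
    integral_add g1.integrable g2.integrable, integral_const_mul] at e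
  exact e

lemma ibp_y (ha : 0 < a) (hb : 0 < b) (P Q : ℝ[X]) :
    Complex.I * cB a b (derivative P) Q + (-Complex.I) * cB a b P (derivative Q)
      + (-2 * b : ℂ) * ∫ p : ℝ × ℝ, (p.2 : ℂ) * cf a b P Q p = 0 := by
  have g := good_cf ha hb P Q
  have g1 := (good_cf ha hb (derivative P) Q).const_mul Complex.I
  have g2 := (good_cf ha hb P (derivative Q)).const_mul (-Complex.I)
  have g3 := (g1.add g2).add (g.snd.const_mul (-2 * b : ℂ))
  have e : ∫ p : ℝ × ℝ, (Complex.I * cf a b (derivative P) Q p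
        + (-Complex.I) * cf a b P (derivative Q) p
        + (-2 * b : ℂ) * ((p.2 : ℂ) * cf a b P Q p)) = 0 := by
    rw [Measure.volume_eq_prod, integral_prod _ g3.integrable]
    refine integral_eq_zero_of_ae ?_
    filter_upwards [g3.integrable.prod_right_ae, g.integrable.prod_right_ae] with x h1 h2
    exact integral_eq_zero_of_hasDerivAt_of_integrable (fun y => deriv_y P Q x y) h1 h2
  rw [integral_add (g1.add g2).integrable (g.snd.const_mul _).integrable,
    integral_add g1.integrable g2.integrable, integral_const_mul, integral_const_mul,
    integral_const_mul] at e
  exact e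

lemma cB_step (ha : 0 < a) (hb : 0 < b) (P Q : ℝ[X]) :
    cB a b (2 * X * P - derivative P) Q
      = 2 * (∫ p : ℝ × ℝ, (p.1 : ℂ) * cf a b P Q p)
        + 2 * Complex.I * (∫ p : ℝ × ℝ, (p.2 : ℂ) * cf a b P Q p)
        + (-1) * cB a b (derivative P) Q := by
  have g := good_cf ha hb P Q
  have g0 := (good_cf ha hb (derivative P) Q).const_mul (-1)
  have g1 := g.fst.const_mul 2
  have g2 := g.snd.const_mul (2 * Complex.I)
  rw [cB, cB, ← integral_const_mul, ← integral_const_mul, ← integral_const_mul,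
    ← integral_add g1.integrable g2.integrable,
    ← integral_add (g1.add g2).integrable g0.integrable]
  congr 1
  funext p
  simp only [cf, map_sub, map_mul, aeval_X, map_ofNat]
  simp only [cz]
  ring

lemma cB_conj (P Q : ℝ[X]) : (starRingEnd ℂ) (cB a b P Q) = cB a b Q P := by
  rw [cB, cB, ← integral_conj]
  congr 1
  funext p
  have h1 : (starRingEnd ℂ) (cz p) = czb p := by simp [cz, czb, sub_eq_add_neg]
  have h2 : (starRingEnd ℂ) (czb p) = cz p := by simp [cz, czb]
  have h3 : (starRingEnd ℂ) (cw a b p) = cw a b p := by rw [cw, Complex.conj_ofReal]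
  simp only [cf, map_mul, ← aeval_conj, h1, h2, h3]
  ring

lemma cB_one :
    cB a b 1 1 = ((√(π / a) * √(π / b) : ℝ) : ℂ) := by
  rw [← integral_gaussian, ← integral_gaussian, ← integral_prod_mul, cB]
  refine Eq.trans ?_ integral_ofReal
  rw [← Measure.volume_eq_prod]
  congr 1
  funext p
  simp [cf, cw, sub_eq_add_neg, Complex.exp_add]
end

lemma deriv_physHermite (n : ℕ) :
    derivative (physHermite (n + 1)) = (2 * (n + 1) : ℝ[X]) * physHermite n := by
  induction n with
  | zero => simp [physHermite]
  | succ n ih =>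
    rw [physHermite, derivative_sub, derivative_mul, ih]
    simp only [derivative_mul, derivative_X, derivative_add, derivative_natCast, derivative_one,
      derivative_ofNat]
    rw [physHermite]
    push_cast
    ring

lemma cB_rec (s : ℝ) (hs0 : 0 < s) (hs1 : s < 1) (P Q : ℝ[X]) :
    cB (1 - s) (1 / s - 1) (2 * X * P - derivative P) Q
      = ((1 + s) / (1 - s) : ℂ) * cB (1 - s) (1 / s - 1) P (derivative Q) := by
  have ha : 0 < 1 - s := by linarith
  have hb : 0 < 1 / s - 1 := by
    rw [sub_pos, lt_div_iff₀ hs0]; linarith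
  have hx := ibp_x ha hb P Q
  have hy := ibp_y ha hb P Q
  rw [cB_step ha hb]
  have h1 : (s : ℂ) ≠ 0 := by exact_mod_cast hs0.ne'
  have h2 : (1 - s : ℂ) ≠ 0 := by exact_mod_cast ha.ne'
  generalize (∫ p : ℝ × ℝ, (p.1 : ℂ) * cf (1 - s) (1 / s - 1) P Q p) = J1 at *
  generalize (∫ p : ℝ × ℝ, (p.2 : ℂ) * cf (1 - s) (1 / s - 1) P Q p) = J2 at *
  generalize cB (1 - s) (1 / s - 1) (derivative P) Q = A at *
  generalize cB (1 - s) (1 / s - 1) P (derivative Q) = B at *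
  push_cast at hx hy
  field_simp at hy ⊢
  have hI := Complex.I_sq
  linear_combination (-1) * hx - Complex.I * hy + s * (A - B) * hI

lemma cB_hermite (s : ℝ) (hs0 : 0 < s) (hs1 : s < 1) (n m : ℕ) :
    cB (1 - s) (1 / s - 1) (physHermite n) (physHermite m)
      = if n = m then (bn s n : ℂ) else 0 := by
  have ha : 0 < 1 - s := by linarith
  have hb : 0 < 1 / s - 1 := by
    rw [sub_pos, lt_div_iff₀ hs0]; linarith
  have hz : ∀ n, cB (1 - s) (1 / s - 1) (physHermite (n + 1)) (physHermite 0) = 0 := by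
    intro n
    rw [show physHermite (n + 1) = 2 * X * physHermite n - derivative (physHermite n) from rfl,
      cB_rec s hs0 hs1]
    simp [physHermite, cB, cf]
  induction n generalizing m with
  | zero =>
    cases m with
    | zero =>
      simp only [physHermite, if_true]
      rw [cB_one]
      congr 1
      rw [← Real.sqrt_mul (by positivity), bn]
      have : π / (1 - s) * (π / (1 / s - 1)) = (π / (1 - s)) ^ 2 * s := by
        have := ha.ne'
        have : (1 / s - 1) = (1 - s) / s := by field_simp
        rw [this]; field_simp
      rw [this, Real.sqrt_mul (by positivity), Real.sqrt_sq (by positivity)]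
      simp; ring
    | succ m =>
      rw [← cB_conj, hz]; simp
  | succ n ih =>
    cases m with
    | zero => rw [hz]; simp
    | succ m =>
      rw [physHermite, cB_rec s hs0 hs1, deriv_physHermite]
      have : cB (1 - s) (1 / s - 1) (physHermite n) ((2 * (m + 1) : ℝ[X]) * physHermite m)
          = (2 * (m + 1) : ℂ) * cB (1 - s) (1 / s - 1) (physHermite n) (physHermite m) := by
        rw [cB, cB, ← integral_const_mul]
        congr 1
        funext p
        simp only [cf, map_mul, map_add, map_ofNat, map_natCast, map_one]
        ring
      rw [this, ih]
      by_cases h : n = m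
      · subst h
        simp only [if_true, bn, Nat.factorial_succ]
        push_cast
        ring
      · simp [h]

theorem complexHermite_orthogonality (s : ℝ) (hs0 : 0 < s) (hs1 : s < 1) (n m : ℕ) :
    (∫ x : ℝ, ∫ y : ℝ,
        Polynomial.aeval ((x : ℂ) + y * Complex.I) (physHermite n) *
          (starRingEnd ℂ) (Polynomial.aeval ((x : ℂ) + y * Complex.I) (physHermite m)) *
          (Real.exp (-(1 - s) * x ^ 2 - (1 / s - 1) * y ^ 2) : ℂ))
      = if n = m then (bn s n : ℂ) else 0 := by
  have ha : 0 < 1 - s := by linarith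
  have hb : 0 < 1 / s - 1 := by
    rw [sub_pos, lt_div_iff₀ hs0]; linarith
  rw [← cB_hermite s hs0 hs1, cB, Measure.volume_eq_prod,
    integral_prod _ (good_cf ha hb _ _).integrable]
  congr 1
  funext x
  congr 1
  funext y
  have h1 : (starRingEnd ℂ) ((x : ℂ) + y * Complex.I) = czb (x, y) := by
    simp [czb, sub_eq_add_neg]
  rw [← aeval_conj, h1, mul_assoc]
  rfl
end

section
/- Let 0 < s < 1. For all z, w ∈ ℂ, the series ∑_{n=0}^∞ 𝔥_{n,s}(z) · conj(𝔥_{n,s}(w)) converges, with sum equal to ((1−s²)/(2πs)) · exp( −((1+s²)/(4s))·(z² + conj(w)²) + ((1−s²)/(2s))·z·conj(w) ). -/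
open Polynomial Real

/-- `𝔥_{n,s}(z) = b_n(s)^{-1/2} e^{-z²/2} H_n(z)`. -/
noncomputable def hns (s : ℝ) (n : ℕ) (z : ℂ) : ℂ :=
  ((Real.sqrt (bn s n) : ℂ))⁻¹ * Complex.exp (-z ^ 2 / 2) *
    Polynomial.aeval z (physHermite n)

lemma hasSum_of_eq {E : Type*} [NormedAddCommGroup E] {f g : ℕ → E} {a b : E} (h : HasSum g b)
    (hf : ∀ n, f n = g n) (ha : a = b) : HasSum f a := by
  obtain rfl : f = g := funext hf
  exact ha ▸ h

open MeasureTheory in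
/-- absolute-value Gaussian-type integrability -/
lemma integrable_exp_abs (c a b : ℝ) (hc : 0 < c) :
    Integrable (fun u : ℝ => Real.exp (-c * u ^ 2 + a * |u| + b)) := by
  have key : ∀ a : ℝ, Integrable (fun u : ℝ => Real.exp (-c * u ^ 2 + a * u + b)) := by
    intro a
    have h := (integrable_cexp_quadratic (b := (c : ℂ)) (by simpa using hc) a b).norm
    refine h.congr (Filter.Eventually.of_forall fun u => ?_)
    simp only [Complex.norm_exp]
    congr 1
    have : (-(c:ℂ) * (u:ℂ) ^ 2 + a * u + b) = ((-c * u ^ 2 + a * u + b : ℝ) : ℂ) := by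
      push_cast; ring
    rw [this, Complex.ofReal_re]
  refine ((key a).add (key (-a))).mono' (by fun_prop) (Filter.Eventually.of_forall fun u => ?_)
  rw [Real.norm_eq_abs, abs_of_pos (Real.exp_pos _)]
  simp only [Pi.add_apply]
  rcases abs_cases u with ⟨h, _⟩ | ⟨h, _⟩
  · rw [h]; linarith [Real.exp_pos (-c * u ^ 2 + -a * u + b)]
  · rw [h, show a * -u = -a * u by ring]; linarith [Real.exp_pos (-c * u ^ 2 + a * u + b)]

lemma norm_yiu (y : ℂ) (u : ℝ) : ‖y + Complex.I * u‖ ≤ ‖y‖ + |u| := by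
  refine (norm_add_le _ _).trans ?_
  simp

lemma norm_cexp_negsq (u : ℝ) : ‖Complex.exp (-(u:ℂ) ^ 2)‖ = Real.exp (-u ^ 2) := by
  rw [show (-(u:ℂ) ^ 2) = ((-u ^ 2 : ℝ) : ℂ) by push_cast; ring, Complex.norm_exp,
    Complex.ofReal_re]

open MeasureTheory in
lemma integrable_pow_gauss (y : ℂ) (n : ℕ) :
    Integrable (fun u : ℝ => (y + Complex.I * u) ^ n * Complex.exp (-(u:ℂ) ^ 2)) := by
  refine ((integrable_exp_abs 1 1 ‖y‖ one_pos).const_mul (n.factorial : ℝ)).mono'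
    (by fun_prop) (Filter.Eventually.of_forall fun u => ?_)
  rw [norm_mul, norm_pow, norm_cexp_negsq]
  have h1 := Real.pow_div_factorial_le_exp (‖y‖ + |u|) (by positivity) n
  rw [div_le_iff₀ (by positivity)] at h1
  have h2 : ‖y + Complex.I * u‖ ^ n ≤ (‖y‖ + |u|) ^ n :=
    pow_le_pow_left₀ (norm_nonneg _) (norm_yiu y u) n
  calc _ ≤ (Real.exp (‖y‖ + |u|) * n.factorial) * Real.exp (-u ^ 2) := by
        gcongr; exact h2.trans h1
    _ = _ := by
        rw [mul_comm (Real.exp (‖y‖ + |u|)), mul_assoc, ← Real.exp_add]; ring_nf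

/-- Gaussian moments. -/
noncomputable def gaussMoment (y : ℂ) (n : ℕ) : ℂ :=
  ∫ u : ℝ, (y + Complex.I * u) ^ n * Complex.exp (-(u:ℂ) ^ 2)

open MeasureTheory in
lemma gaussMoment_succ (y : ℂ) (n : ℕ) :
    n * gaussMoment y (n - 1) + 2 * gaussMoment y (n + 1) - 2 * y * gaussMoment y n = 0 := by
  have hi := integrable_pow_gauss y
  have hI : Integrable (fun u : ℝ =>
      ((n:ℂ) * ((y + Complex.I * u) ^ (n-1) * Complex.exp (-(u:ℂ) ^ 2))
      + 2 * ((y + Complex.I * u) ^ (n+1) * Complex.exp (-(u:ℂ) ^ 2)))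
      - (2 * y) * ((y + Complex.I * u) ^ n * Complex.exp (-(u:ℂ) ^ 2))) :=
    (((hi (n-1)).const_mul _).add ((hi (n+1)).const_mul _)).sub ((hi n).const_mul _)
  have hd : ∀ u : ℝ, HasDerivAt
      (fun u : ℝ => -Complex.I * ((y + Complex.I * u) ^ n * Complex.exp (-(u:ℂ) ^ 2)))
      (((n:ℂ) * ((y + Complex.I * u) ^ (n-1) * Complex.exp (-(u:ℂ) ^ 2))
      + 2 * ((y + Complex.I * u) ^ (n+1) * Complex.exp (-(u:ℂ) ^ 2)))
      - (2 * y) * ((y + Complex.I * u) ^ n * Complex.exp (-(u:ℂ) ^ 2))) u := by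
    intro u
    have h0 : HasDerivAt (fun u : ℝ => (u : ℂ)) 1 u := Complex.ofRealCLM.hasDerivAt
    have h1 := ((h0.const_mul Complex.I).const_add y).pow n
    have h2 := ((h0.pow 2).neg).cexp
    refine ((h1.mul h2).const_mul (-Complex.I)).congr_deriv ?_
    simp only [Pi.pow_apply, Pi.neg_apply]
    have hII := Complex.I_mul_I
    push_cast
    linear_combination (-(n:ℂ) * ((y + Complex.I * u) ^ (n-1) * Complex.exp (-(u:ℂ) ^ 2))) * hII
  have := integral_eq_zero_of_hasDerivAt_of_integrable hd hI ((hi n).const_mul _)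
  have hA : Integrable (fun u : ℝ =>
      ((n:ℂ) * ((y + Complex.I * u) ^ (n-1) * Complex.exp (-(u:ℂ) ^ 2))
      + 2 * ((y + Complex.I * u) ^ (n+1) * Complex.exp (-(u:ℂ) ^ 2)))) :=
    ((hi (n-1)).const_mul _).add ((hi (n+1)).const_mul _)
  rw [integral_sub hA ((hi n).const_mul _),
    integral_add ((hi (n-1)).const_mul _) ((hi (n+1)).const_mul _)] at this
  simp only [integral_const_mul] at this
  exact this

lemma physHermite_deriv (n : ℕ) :
    Polynomial.derivative (physHermite (n+1)) = 2 * ((n:ℝ[X]) + 1) * physHermite n := by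
  induction n with
  | zero => simp [physHermite]
  | succ n ih =>
    rw [physHermite, map_sub, ih]
    have h2 : Polynomial.derivative (2 * ((n:ℝ[X]) + 1) * physHermite n)
        = 2 * ((n:ℝ[X]) + 1) * Polynomial.derivative (physHermite n) := by
      simp [Polynomial.derivative_mul]
    have h3 : Polynomial.derivative (2 * X * physHermite (n+1) : ℝ[X])
        = 2 * physHermite (n+1) + 2 * X * (2 * ((n:ℝ[X]) + 1) * physHermite n) := by
      rw [Polynomial.derivative_mul, ih]
      simp [Polynomial.derivative_mul]
    rw [h2, h3, physHermite]
    push_cast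
    ring

lemma gaussMoment_eq (y : ℂ) (n : ℕ) :
    2 ^ n * gaussMoment y n = (Real.sqrt π : ℂ) * aeval y (physHermite n) := by
  induction n using Nat.twoStepInduction with
  | zero =>
    simp only [gaussMoment, physHermite, pow_zero, one_mul, map_one, mul_one]
    have := integral_gaussian 1
    rw [div_one] at this
    rw [← this, ← integral_complex_ofReal]
    congr 1; ext u; push_cast; ring_nf
  | one =>
    have h := gaussMoment_succ y 0
    have h0 : gaussMoment y 0 = (Real.sqrt π : ℂ) := by
      simp only [gaussMoment, pow_zero, one_mul]
      have := integral_gaussian 1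
      rw [div_one] at this
      rw [← this, ← integral_complex_ofReal]
      congr 1; ext u; push_cast; ring_nf
    simp only [physHermite, h0, derivative_one, map_sub, map_mul, map_ofNat, aeval_X, map_one,
      map_zero, Nat.cast_zero, pow_one, zero_add] at h ⊢
    linear_combination h
  | more n h0 h1 =>
    have h := gaussMoment_succ y (n+1)
    rw [physHermite, physHermite_deriv]
    simp only [Nat.add_sub_cancel, map_sub, map_mul, map_add, aeval_X, map_ofNat, map_natCast,
      map_one] at h ⊢
    push_cast at h
    linear_combination (2 ^ (n+1)) * h + 2 * y * h1 - 2 * ((n:ℂ)+1) * h0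

/-- Generalised Hermite polynomials `P_{n+1} = 2X P_n - e P_n'`. -/
noncomputable def genHermite (e : ℝ) : ℕ → ℝ[X]
  | 0 => 1
  | n + 1 => 2 * X * genHermite e n - C e * Polynomial.derivative (genHermite e n)

lemma genHermite_one (n : ℕ) : genHermite 1 n = physHermite n := by
  induction n with
  | zero => rfl
  | succ n ih => rw [genHermite, physHermite, ih]; simp

lemma genHermite_iteratedDeriv (e : ℝ) (x : ℂ) (n : ℕ) :
    iteratedDeriv n (fun r : ℂ => Complex.exp (2 * x * r - e * r ^ 2)) =
      fun r => aeval (x - e * r) (genHermite e n) * Complex.exp (2 * x * r - e * r ^ 2) := by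
  induction n with
  | zero => ext r; simp [genHermite]
  | succ n ih =>
    rw [iteratedDeriv_succ, ih]
    ext r
    have h1 : HasDerivAt (fun r : ℂ => x - e * r) (-(e * 1)) r :=
      ((hasDerivAt_id r).const_mul (e:ℂ)).const_sub x
    have h2 := (Polynomial.hasDerivAt_aeval (genHermite e n) (x - e * r)).comp r h1
    have h3 : HasDerivAt (fun r : ℂ => 2 * x * r - e * r ^ 2) (2 * x * 1 - e * (2 * r)) r := by
      have := ((hasDerivAt_id r).const_mul (2 * x)).sub (((hasDerivAt_id r).pow 2).const_mul (e:ℂ))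
      refine this.congr_deriv ?_
      simp
    have h4 := (h2.mul h3.cexp).deriv
    refine Eq.trans h4 ?_
    simp only [genHermite, map_sub, map_mul, aeval_X, map_ofNat, aeval_C, Function.comp]
    simp only [Complex.coe_algebraMap]
    ring

lemma genHermite_hasSum (e : ℝ) (x r : ℂ) :
    HasSum (fun n : ℕ => aeval x (genHermite e n) * r ^ n / n.factorial)
      (Complex.exp (2 * x * r - e * r ^ 2)) := by
  have h := Complex.hasSum_taylorSeries_of_entire
    (f := fun r : ℂ => Complex.exp (2 * x * r - e * r ^ 2)) (by fun_prop) 0 r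
  refine h.congr_fun ?_ 
  intro n
  rw [genHermite_iteratedDeriv]
  simp [smul_eq_mul]
  ring

lemma genHermite_hasSum_real (e x r : ℝ) :
    HasSum (fun n : ℕ => eval x (genHermite e n) * r ^ n / n.factorial)
      (Real.exp (2 * x * r - e * r ^ 2)) := by
  have h := genHermite_hasSum e x r
  rw [← Complex.hasSum_ofReal]
  push_cast
  refine h.congr_fun ?_
  intro n
  have : aeval (x:ℂ) (genHermite e n) = ((eval x (genHermite e n) : ℝ) : ℂ) := by
    have := Polynomial.aeval_algebraMap_apply ℂ x (genHermite e n)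
    simpa using this
  rw [this]

lemma coeff_le (n : ℕ) : ∀ i, |(physHermite n).coeff i| ≤ (genHermite (-1) n).coeff i := by
  induction n with
  | zero => 
    intro i
    simp only [physHermite, genHermite, coeff_one]
    split_ifs <;> simp
  | succ n ih =>
    intro i
    have e1 : ∀ p : ℝ[X], 2 * X * p = C 2 * (X * p) := by
      intro p; rw [mul_assoc]; rfl
    have hd : |(Polynomial.derivative (physHermite n)).coeff i|
        ≤ (Polynomial.derivative (genHermite (-1) n)).coeff i := by
      rw [coeff_derivative, coeff_derivative, abs_mul, abs_of_nonneg (by positivity : (0:ℝ) ≤ i + 1)]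
      exact mul_le_mul_of_nonneg_right (ih _) (by positivity)
    have hx : |(X * physHermite n).coeff i| ≤ (X * genHermite (-1) n).coeff i := by
      cases i with
      | zero => simp
      | succ i => rw [coeff_X_mul, coeff_X_mul]; exact ih i
    rw [physHermite, genHermite, e1, e1, coeff_sub, coeff_sub, coeff_C_mul, coeff_C_mul,
      coeff_C_mul]
    refine (abs_sub _ _).trans ?_
    rw [abs_mul, abs_two]
    linarith

lemma norm_physHermite_le (n : ℕ) (x : ℂ) :
    ‖aeval x (physHermite n)‖ ≤ eval ‖x‖ (genHermite (-1) n) := by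
  set N := max (physHermite n).natDegree (genHermite (-1) n).natDegree + 1 with hN
  rw [aeval_eq_sum_range' (n := N) (by omega), eval_eq_sum_range' (n := N) (by omega)]
  refine (norm_sum_le _ _).trans (Finset.sum_le_sum fun i _ => ?_)
  rw [norm_smul, norm_pow, Real.norm_eq_abs]
  exact mul_le_mul_of_nonneg_right (coeff_le n i) (by positivity)

open MeasureTheory in
lemma mehler_aux (t : ℝ) (h0 : 0 < t) (h1 : t < 1) (x y : ℂ) :
    HasSum (fun n : ℕ => aeval x (physHermite n) * t ^ n / n.factorial * gaussMoment y n)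
      (∫ u : ℝ, Complex.exp (2 * x * (t * (y + Complex.I * u)) - (t * (y + Complex.I * u)) ^ 2)
        * Complex.exp (-(u:ℂ) ^ 2)) := by
  have hb : ∀ u : ℝ, HasSum (fun n : ℕ => eval ‖x‖ (genHermite (-1) n) *
      (t * (‖y‖ + |u|)) ^ n / n.factorial * Real.exp (-u ^ 2))
      (Real.exp (-(1 - t ^ 2) * u ^ 2 + (2 * ‖x‖ * t + 2 * t ^ 2 * ‖y‖) * |u| +
        (2 * ‖x‖ * t * ‖y‖ + t ^ 2 * ‖y‖ ^ 2))) := by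
    intro u
    have h := (genHermite_hasSum_real (-1) ‖x‖ (t * (‖y‖ + |u|))).mul_right (Real.exp (-u ^ 2))
    rw [← Real.exp_add] at h
    refine hasSum_of_eq h (fun _ => rfl) ?_
    congr 1
    have := sq_abs u
    linear_combination (-t^2) * this
  have key := hasSum_integral_of_dominated_convergence (μ := (volume : Measure ℝ))
    (F := fun (n : ℕ) (u : ℝ) => aeval x (physHermite n) * t ^ n / n.factorial *
      ((y + Complex.I * u) ^ n * Complex.exp (-(u:ℂ) ^ 2)))
    (f := fun u : ℝ => Complex.exp (2 * x * (t * (y + Complex.I * u)) -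
      (t * (y + Complex.I * u)) ^ 2) * Complex.exp (-(u:ℂ) ^ 2))
    (fun n u => eval ‖x‖ (genHermite (-1) n) *
      (t * (‖y‖ + |u|)) ^ n / n.factorial * Real.exp (-u ^ 2))
    (fun n => ((integrable_pow_gauss y n).const_mul _).aestronglyMeasurable)
    (fun n => Filter.Eventually.of_forall fun u => ?_)
    (Filter.Eventually.of_forall fun u => (hb u).summable)
    ?_ (Filter.Eventually.of_forall fun u => ?_)
  · simp only [integral_const_mul] at key
    exact key
  · have hK : 0 ≤ eval ‖x‖ (genHermite (-1) n) := (norm_nonneg _).trans (norm_physHermite_le n x)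
    have e : aeval x (physHermite n) * (t:ℂ) ^ n / n.factorial *
      ((y + Complex.I * u) ^ n * Complex.exp (-(u:ℂ) ^ 2)) = aeval x (physHermite n) *
      (t * (y + Complex.I * u)) ^ n / n.factorial * Complex.exp (-(u:ℂ) ^ 2) := by
      rw [mul_pow]; ring
    rw [e, norm_mul, norm_div, norm_mul, norm_pow, norm_mul, norm_cexp_negsq, Complex.norm_natCast,
      Complex.norm_real, Real.norm_eq_abs, abs_of_pos h0]
    gcongr
    · exact norm_physHermite_le n x
    · exact norm_yiu y u
  · simp only [fun u => (hb u).tsum_eq]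
    exact integrable_exp_abs _ _ _ (by nlinarith)
  · have h := (genHermite_hasSum 1 x (t * (y + Complex.I * u))).mul_right
      (Complex.exp (-(u:ℂ) ^ 2))
    simp only [genHermite_one, Complex.ofReal_one, one_mul] at h
    refine h.congr_fun ?_
    intro n
    rw [mul_pow]; ring

lemma mehler_integral (t : ℝ) (h0 : 0 < t) (h1 : t < 1) (x y : ℂ) :
    (∫ u : ℝ, Complex.exp (2 * x * (t * (y + Complex.I * u)) - (t * (y + Complex.I * u)) ^ 2)
        * Complex.exp (-(u:ℂ) ^ 2)) = (Real.sqrt (π / (1 - t ^ 2)) : ℂ) *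
      Complex.exp ((2 * t * x * y - t ^ 2 * (x ^ 2 + y ^ 2)) / (1 - t ^ 2)) := by
  have ht : (0:ℝ) < 1 - t ^ 2 := by nlinarith
  have htc : (1 - (t:ℂ) ^ 2) ≠ 0 := by
    have := ht.ne'
    exact_mod_cast this
  have h := integral_cexp_quadratic (b := ((-(1 - t ^ 2) : ℝ) : ℂ))
    (by rw [Complex.ofReal_re]; linarith)
    (2 * x * t * Complex.I - 2 * t ^ 2 * y * Complex.I) (2 * x * t * y - t ^ 2 * y ^ 2)
  have hII := Complex.I_sq
  refine Eq.trans ?_ (h.trans ?_)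
  · congr 1; ext u
    rw [← Complex.exp_add]
    congr 1
    push_cast
    linear_combination (-(t:ℂ) ^ 2 * u ^ 2) * hII
  · congr 1
    · rw [Real.sqrt_eq_rpow, Complex.ofReal_cpow (by positivity)]
      push_cast
      congr 2; ring
    · congr 1
      push_cast
      have hm : (-(1 - (t:ℂ) ^ 2)) ≠ 0 := neg_ne_zero.mpr htc
      have : (2 * x * t * Complex.I - 2 * t ^ 2 * y * Complex.I) ^ 2
          = -4 * t ^ 2 * (x - t * y) ^ 2 := by
        linear_combination (4 * (t:ℂ) ^ 2 * (x - t * y) ^ 2) * hII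
      rw [this]
      field_simp
      ring

lemma mehler (t : ℝ) (h0 : 0 < t) (h1 : t < 1) (x y : ℂ) :
    HasSum (fun n : ℕ => aeval x (physHermite n) * aeval y (physHermite n) *
        ((t / 2) ^ n / n.factorial))
      (((Real.sqrt (1 - t ^ 2))⁻¹ : ℝ) *
      Complex.exp ((2 * t * x * y - t ^ 2 * (x ^ 2 + y ^ 2)) / (1 - t ^ 2))) := by
  have h := (mehler_aux t h0 h1 x y).mul_left ((Real.sqrt π : ℂ)⁻¹)
  have hp : (Real.sqrt π : ℂ) ≠ 0 := by
    exact_mod_cast (Real.sqrt_pos.mpr Real.pi_pos).ne'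
  rw [mehler_integral t h0 h1, ← mul_assoc, Real.sqrt_div Real.pi_pos.le] at h
  refine hasSum_of_eq h (fun n => ?_) ?_
  · have hf : (n.factorial : ℂ) ≠ 0 := by exact_mod_cast n.factorial_ne_zero
    have := gaussMoment_eq y n
    have h2 : (2:ℂ) ^ n ≠ 0 := pow_ne_zero _ two_ne_zero
    have h3 : aeval y (physHermite n) = (Real.sqrt π : ℂ)⁻¹ * (2 ^ n * gaussMoment y n) := by
      rw [this]; field_simp
    rw [h3, div_pow]
    field_simp
  · congr 1
    push_cast
    field_simp

theorem hns_reproducing_kernel_sum (s : ℝ) (hs0 : 0 < s) (hs1 : s < 1) (z w : ℂ) :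
    HasSum (fun n : ℕ => hns s n z * (starRingEnd ℂ) (hns s n w))
      (((1 - s ^ 2) / (2 * Real.pi * s) : ℝ) *
        Complex.exp (-(((1 + s ^ 2) / (4 * s) : ℝ)) * (z ^ 2 + (starRingEnd ℂ) w ^ 2) +
          (((1 - s ^ 2) / (2 * s) : ℝ)) * (z * (starRingEnd ℂ) w))) := by
  have hc : ∀ n, (starRingEnd ℂ) (hns s n w) = hns s n ((starRingEnd ℂ) w) := by
    intro n
    simp only [hns, map_mul, map_inv₀, Complex.conj_ofReal, ← Complex.exp_conj, aeval_conj,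
      map_div₀, map_neg, map_pow, map_ofNat]
  simp only [hc]
  generalize (starRingEnd ℂ) w = y
  have h1s : 0 < 1 - s := by linarith
  have h1s' : 0 < 1 + s := by linarith
  set t : ℝ := (1 - s) / (1 + s) with ht
  have ht0 : 0 < t := by positivity
  have ht1 : t < 1 := by rw [ht, div_lt_one h1s']; linarith
  have hsq : Real.sqrt (1 - t ^ 2) = 2 * Real.sqrt s / (1 + s) := by
    rw [show 1 - t ^ 2 = (2 * Real.sqrt s / (1 + s)) ^ 2 by
      rw [div_pow (2 * Real.sqrt s), mul_pow, Real.sq_sqrt hs0.le, ht]; field_simp; ring]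
    exact Real.sqrt_sq (by positivity)
  have hss : Real.sqrt s * Real.sqrt s = s := Real.mul_self_sqrt hs0.le
  have hsp : 0 < Real.sqrt s := Real.sqrt_pos.mpr hs0
  have h := (mehler t ht0 ht1 z y).mul_left
    ((((1 - s) / (π * Real.sqrt s) : ℝ) : ℂ) * (Complex.exp (-z ^ 2 / 2) * Complex.exp (-y ^ 2 / 2)))
  rw [hsq] at h
  refine hasSum_of_eq h (fun n => ?_) ?_
  · have hbp : 0 < bn s n := by
      unfold bn; have := Real.pi_pos; positivity
    have hb : ((Real.sqrt (bn s n) : ℂ))⁻¹ * ((Real.sqrt (bn s n) : ℂ))⁻¹ =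
        (((1 - s) / (π * Real.sqrt s) : ℝ) : ℂ) * ((t / 2) ^ n / n.factorial) := by
      rw [← mul_inv, ← Complex.ofReal_mul, Real.mul_self_sqrt hbp.le]
      have : (bn s n)⁻¹ = (1 - s) / (π * Real.sqrt s) * ((t / 2) ^ n / n.factorial) := by
        have e : t / 2 = (2 * (1 + s) / (1 - s))⁻¹ := by rw [ht]; field_simp
        rw [e, bn, inv_pow]
        have := Real.pi_pos
        field_simp
      rw [← Complex.ofReal_inv, this]
      push_cast
      ring
    unfold hns
    linear_combination (Complex.exp (-z ^ 2 / 2) * Complex.exp (-y ^ 2 / 2) *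
      aeval z (physHermite n) * aeval y (physHermite n)) * hb
  · have hc1 : (1 - s ^ 2) / (2 * Real.pi * s) =
        (1 - s) / (π * Real.sqrt s) * (2 * Real.sqrt s / (1 + s))⁻¹ := by
      have := Real.pi_pos
      have h2 : Real.sqrt s ^ 2 = s := by rw [sq, hss]
      field_simp
      rw [h2]; ring
    rw [hc1, Complex.ofReal_mul, ← Complex.exp_add]
    have he : -(((1 + s ^ 2) / (4 * s) : ℝ) : ℂ) * (z ^ 2 + y ^ 2) +
          (((1 - s ^ 2) / (2 * s) : ℝ) : ℂ) * (z * y) = (-z ^ 2 / 2 + -y ^ 2 / 2) +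
          (2 * t * z * y - t ^ 2 * (z ^ 2 + y ^ 2)) / (1 - t ^ 2) := by
      have e1 : (1 + s ^ 2) / (4 * s) = 1 / 2 + t ^ 2 / (1 - t ^ 2) := by
        have : 1 - t ^ 2 = 4 * s / (1 + s) ^ 2 := by rw [ht]; field_simp; ring
        rw [this, ht]; field_simp; ring
      have e2 : (1 - s ^ 2) / (2 * s) = 2 * t / (1 - t ^ 2) := by
        have : 1 - t ^ 2 = 4 * s / (1 + s) ^ 2 := by rw [ht]; field_simp; ring
        rw [this, ht]; field_simp; ring
      rw [e1, e2]
      push_cast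
      ring
    rw [he, Complex.exp_add (-z ^ 2 / 2 + -y ^ 2 / 2)]
    ring
end

section
/- Let 0 < s < 1. For all n, m ∈ ℕ, ∫_{SU(2)} ∫_{ℝ²} H_n(Q(x+iy, u)) · star(H_m(Q(x+iy, u))) · exp(−(1−s)x² − (1/s − 1)y²) dx dy dω(u) = δ_{nm} · b_n(s) · 1, as an identity in ℍ (the family {H_n(q)} is orthogonal in the quaternionic L²-space). -/
open Quaternion Matrix MeasureTheory Polynomial Real

/-- The 2×2 complex matrix `M(z,u) = u · diag(z, conj z) · u*`. -/
noncomputable def repMat (z : ℂ) (u : Matrix.specialUnitaryGroup (Fin 2) ℂ) :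
    Matrix (Fin 2) (Fin 2) ℂ :=
  (u : Matrix (Fin 2) (Fin 2) ℂ) * Matrix.diagonal ![z, (starRingEnd ℂ) z] *
    star (u : Matrix (Fin 2) (Fin 2) ℂ)

/-- The quaternion `Q(z,u)` whose standard 2×2 complex matrix representation is `repMat z u`. -/
noncomputable def quatOf (z : ℂ) (u : Matrix.specialUnitaryGroup (Fin 2) ℂ) : ℍ[ℝ] :=
  ⟨(repMat z u 0 0).re, (repMat z u 1 0).im, (repMat z u 1 0).re, (repMat z u 0 0).im⟩

noncomputable instance : MeasurableSpace (Matrix.specialUnitaryGroup (Fin 2) ℂ) := borel _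

/-- Gaussian weight. -/
noncomputable def hwt (s : ℝ) (p : ℝ × ℝ) : ℝ :=
  Real.exp (-(1 - s) * p.1 ^ 2 - (1 / s - 1) * p.2 ^ 2)

/-- Complex point. -/
noncomputable def zpt (p : ℝ × ℝ) : ℂ := (p.1 : ℂ) + p.2 * Complex.I

/-- Integrand. -/
noncomputable def hF (s : ℝ) (f g : ℝ[X]) (p : ℝ × ℝ) : ℂ :=
  (hwt s p : ℂ) * (aeval (zpt p) f * (starRingEnd ℂ) (aeval (zpt p) g))

/-- Pairing. -/
noncomputable def hB (s : ℝ) (f g : ℝ[X]) : ℂ := ∫ p : ℝ × ℝ, hF s f g p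

lemma poly_growth (f : ℝ[X]) (ε : ℝ) (hε : 0 < ε) :
    ∃ C : ℝ, 0 ≤ C ∧ ∀ z : ℂ, ‖aeval z f‖ ≤ C * Real.exp (ε * ‖z‖ ^ 2) := by
  induction f using Polynomial.induction_on' with
  | add p q hp hq =>
    obtain ⟨C, hC, h⟩ := hp
    obtain ⟨D, hD, h'⟩ := hq
    refine ⟨C + D, by positivity, fun z => ?_⟩
    rw [map_add, add_mul]
    exact (norm_add_le _ _).trans (add_le_add (h z) (h' z))
  | monomial k c =>
    refine ⟨|c| * (1 + k.factorial / ε ^ k), by positivity, fun z => ?_⟩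
    have h1 : ‖aeval z (monomial k c)‖ = |c| * ‖z‖ ^ k := by
      rw [aeval_monomial]; simp
    rw [h1, mul_assoc]
    refine mul_le_mul_of_nonneg_left ?_ (abs_nonneg c)
    have h2 : ‖z‖ ^ k ≤ 1 + (‖z‖ ^ 2) ^ k := by
      rw [← pow_mul, mul_comm 2 k, pow_mul]
      nlinarith [sq_nonneg (‖z‖ ^ k - 1), sq_nonneg (‖z‖ ^ k)]
    have h3 : (ε * ‖z‖ ^ 2) ^ k / k.factorial ≤ Real.exp (ε * ‖z‖ ^ 2) :=
      Real.pow_div_factorial_le_exp _ (by positivity) k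
    have h4 : (1 : ℝ) ≤ Real.exp (ε * ‖z‖ ^ 2) := Real.one_le_exp (by positivity)
    have h5 : (‖z‖ ^ 2) ^ k ≤ k.factorial / ε ^ k * Real.exp (ε * ‖z‖ ^ 2) := by
      have : (‖z‖ ^ 2) ^ k = k.factorial / ε ^ k * ((ε * ‖z‖ ^ 2) ^ k / k.factorial) := by
        rw [mul_pow]; field_simp
      rw [this]
      exact mul_le_mul_of_nonneg_left h3 (by positivity)
    linarith

lemma zpt_norm_sq (p : ℝ × ℝ) : ‖zpt p‖ ^ 2 = p.1 ^ 2 + p.2 ^ 2 := by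
  rw [← Complex.normSq_eq_norm_sq, zpt, Complex.normSq_add_mul_I]

lemma hF_cont (s : ℝ) (f g : ℝ[X]) : Continuous (hF s f g) := by
  have hz : Continuous zpt := by unfold zpt; fun_prop
  have h (f : ℝ[X]) : Continuous fun p => aeval (zpt p) f :=
    (Polynomial.continuous_aeval f).comp hz
  have hw : Continuous fun p => (hwt s p : ℂ) := by unfold hwt; fun_prop
  unfold hF
  exact hw.mul ((h f).mul (Complex.continuous_conj.comp (h g)))

lemma hF_int (s : ℝ) (hs0 : 0 < s) (hs1 : s < 1) (f g : ℝ[X]) : Integrable (hF s f g) := by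
  have hε : 0 < (1 - s) / 4 := by linarith
  obtain ⟨C, hC, h⟩ := poly_growth f _ hε
  obtain ⟨D, hD, h'⟩ := poly_growth g _ hε
  have hG : Integrable (fun p : ℝ × ℝ => (C * D) *
      (Real.exp (-((1 - s) / 2) * p.1 ^ 2) * Real.exp (-((1 - s) / 2) * p.2 ^ 2))) :=
    ((integrable_exp_neg_mul_sq (by linarith : 0 < (1 - s) / 2)).mul_prod
      (integrable_exp_neg_mul_sq (by linarith : 0 < (1 - s) / 2))).const_mul _
  refine hG.mono' (hF_cont s f g).aestronglyMeasurable (Filter.Eventually.of_forall fun p => ?_)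
  have hle : hwt s p ≤ Real.exp (-(1 - s) * (p.1 ^ 2 + p.2 ^ 2)) := by
    unfold hwt
    apply Real.exp_le_exp.2
    have : 1 - s ≤ 1 / s - 1 := by
      rw [le_sub_iff_add_le, le_div_iff₀ hs0]; nlinarith [sq_nonneg (1 - s)]
    nlinarith [sq_nonneg p.2]
  have e : ‖hF s f g p‖ = hwt s p * (‖aeval (zpt p) f‖ * ‖aeval (zpt p) g‖) := by
    unfold hF
    rw [norm_mul, norm_mul, RCLike.norm_conj, Complex.norm_real, Real.norm_of_nonneg]
    unfold hwt; positivity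
  rw [e]
  calc _ ≤ Real.exp (-(1 - s) * (p.1 ^ 2 + p.2 ^ 2)) *
        ((C * Real.exp ((1 - s) / 4 * ‖zpt p‖ ^ 2)) * (D * Real.exp ((1 - s) / 4 * ‖zpt p‖ ^ 2))) := by
        gcongr
        · exact h _
        · exact h' _
    _ = (C * D) * (Real.exp (-(1 - s) * (p.1 ^ 2 + p.2 ^ 2)) *
        (Real.exp ((1 - s) / 4 * ‖zpt p‖ ^ 2) * Real.exp ((1 - s) / 4 * ‖zpt p‖ ^ 2))) := by ring
    _ = _ := by
        rw [zpt_norm_sq, ← Real.exp_add, ← Real.exp_add, ← Real.exp_add]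
        congr 2; ring

lemma hF_dx (s : ℝ) (f g : ℝ[X]) (x y : ℝ) :
    HasDerivAt (fun x => hF s f g (x, y))
      (-(1 - s) * (hF s (X * f) g (x, y) + hF s f (X * g) (x, y))
        + (hF s (derivative f) g (x, y) + hF s f (derivative g) (x, y))) x := by
  have hz : HasDerivAt (fun x : ℝ => zpt (x, y)) 1 x := by
    unfold zpt
    simpa using (Complex.ofRealCLM.hasDerivAt (x := x)).add_const ((y : ℂ) * Complex.I)
  have hf (f : ℝ[X]) : HasDerivAt (fun x : ℝ => aeval (zpt (x, y)) f)
      (aeval (zpt (x, y)) (derivative f) * 1) x :=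
    HasDerivAt.comp (h₂ := fun z : ℂ => aeval z f) x (Polynomial.hasDerivAt_aeval f (zpt (x, y))) hz
  have hg := (hf g).star
  have hw : HasDerivAt (fun x : ℝ => (hwt s (x, y) : ℂ))
      ((hwt s (x, y) * (-(1 - s) * (2 * x)) : ℝ) : ℂ) x := by
    apply HasDerivAt.ofReal_comp
    unfold hwt
    apply HasDerivAt.exp
    dsimp only
    apply HasDerivAt.sub_const
    apply HasDerivAt.const_mul
    simpa using hasDerivAt_pow 2 x
  have := hw.mul ((hf f).mul hg)
  refine this.congr_deriv ?_
  simp only [hF, map_mul, aeval_X, Complex.ofReal_mul, Complex.star_def, Pi.mul_apply]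
  have : zpt (x, y) + (starRingEnd ℂ) (zpt (x, y)) = 2 * x := by
    simp [zpt]; ring
  push_cast
  linear_combination (norm := (simp only [map_one]; ring_nf)) ((hwt s (x, y) : ℂ) * (1 - s) * (aeval (zpt (x, y)) f) * (starRingEnd ℂ) (aeval (zpt (x, y)) g)) * this

lemma hF_dy (s : ℝ) (f g : ℝ[X]) (x y : ℝ) :
    HasDerivAt (fun y => hF s f g (x, y))
      (Complex.I * ((1 / s - 1) * (hF s (X * f) g (x, y) - hF s f (X * g) (x, y))
        + (hF s (derivative f) g (x, y) - hF s f (derivative g) (x, y)))) y := by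
  have hz : HasDerivAt (fun y : ℝ => zpt (x, y)) Complex.I y := by
    unfold zpt
    simpa using ((Complex.ofRealCLM.hasDerivAt (x := y)).mul_const Complex.I).const_add (x : ℂ)
  have hf (f : ℝ[X]) : HasDerivAt (fun y : ℝ => aeval (zpt (x, y)) f)
      (aeval (zpt (x, y)) (derivative f) * Complex.I) y :=
    HasDerivAt.comp (h₂ := fun z : ℂ => aeval z f) y (Polynomial.hasDerivAt_aeval f (zpt (x, y))) hz
  have hg := (hf g).star
  have hw : HasDerivAt (fun y : ℝ => (hwt s (x, y) : ℂ))
      ((hwt s (x, y) * (-((1 / s - 1) * (2 * y))) : ℝ) : ℂ) y := by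
    apply HasDerivAt.ofReal_comp
    unfold hwt
    apply HasDerivAt.exp
    dsimp only
    apply HasDerivAt.const_sub
    apply HasDerivAt.const_mul
    simpa using hasDerivAt_pow 2 y
  have := hw.mul ((hf f).mul hg)
  refine this.congr_deriv ?_
  simp only [hF, map_mul, aeval_X, Complex.ofReal_mul, Complex.star_def, Pi.mul_apply, Complex.conj_I]
  have : Complex.I * (zpt (x, y) - (starRingEnd ℂ) (zpt (x, y))) = - 2 * y := by
    simp [zpt]; ring_nf; simp
  push_cast
  linear_combination (norm := ring_nf) (-(hwt s (x, y) : ℂ) * (1 / s - 1) * (aeval (zpt (x, y)) f) * (starRingEnd ℂ) (aeval (zpt (x, y)) g)) * this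

lemma hB_x (s : ℝ) (hs0 : 0 < s) (hs1 : s < 1) (f g : ℝ[X]) :
    -(1 - s) * (hB s (X * f) g + hB s f (X * g)) + (hB s (derivative f) g + hB s f (derivative g)) = 0 := by
  have I := hF_int s hs0 hs1
  have i1 := ((I (X * f) g).add (I f (X * g))).const_mul (-(1 - s) : ℂ)
  have i2 := (I (derivative f) g).add (I f (derivative g))
  have i3 := i1.add i2
  have e : ∫ p, _ = _ := integral_add i1 i2
  rw [integral_const_mul] at e
  have e1 : ∫ p, _ = _ := integral_add (I (X * f) g) (I f (X * g))
  have e2 : ∫ p, _ = _ := integral_add (I (derivative f) g) (I f (derivative g))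
  simp only [Pi.add_apply] at e
  rw [e1, e2] at e
  unfold hB
  rw [← e, Measure.volume_eq_prod, integral_prod_symm _ (by rw [Measure.volume_eq_prod] at i3; exact i3)]
  refine integral_eq_zero_of_ae ?_
  rw [Measure.volume_eq_prod] at i3
  have i0 := I f g
  rw [Measure.volume_eq_prod] at i0
  filter_upwards [i3.prod_left_ae, i0.prod_left_ae] with y h1 h2
  exact integral_eq_zero_of_hasDerivAt_of_integrable (fun x => hF_dx s f g x y) h1 h2

lemma hB_y (s : ℝ) (hs0 : 0 < s) (hs1 : s < 1) (f g : ℝ[X]) :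
    Complex.I * ((1 / s - 1) * (hB s (X * f) g - hB s f (X * g)) + (hB s (derivative f) g - hB s f (derivative g))) = 0 := by
  have I := hF_int s hs0 hs1
  have i1 := ((I (X * f) g).sub (I f (X * g))).const_mul (1 / s - 1 : ℂ)
  have i2 := (I (derivative f) g).sub (I f (derivative g))
  have i3 := (i1.add i2).const_mul Complex.I
  have e : ∫ p, _ = _ := integral_add i1 i2
  rw [integral_const_mul] at e
  have e1 : ∫ p, _ = _ := integral_sub (I (X * f) g) (I f (X * g))
  have e2 : ∫ p, _ = _ := integral_sub (I (derivative f) g) (I f (derivative g))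
  simp only [Pi.sub_apply] at e
  rw [e1, e2] at e
  unfold hB
  rw [← e, ← integral_const_mul, Measure.volume_eq_prod, integral_prod _ (by rw [Measure.volume_eq_prod] at i3; exact i3)]
  refine integral_eq_zero_of_ae ?_
  rw [Measure.volume_eq_prod] at i3
  have i0 := I f g
  rw [Measure.volume_eq_prod] at i0
  filter_upwards [i3.prod_right_ae, i0.prod_right_ae] with x h1 h2
  exact integral_eq_zero_of_hasDerivAt_of_integrable (fun y => hF_dy s f g x y) h1 h2

lemma hB_left (s : ℝ) (hs0 : 0 < s) (hs1 : s < 1) (f₁ f₂ g : ℝ[X]) (c : ℝ) :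
    hB s (c • f₁ - f₂) g = c * hB s f₁ g - hB s f₂ g := by
  have I := hF_int s hs0 hs1
  unfold hB
  rw [← integral_const_mul, ← integral_sub ((I _ _).const_mul _) (I _ _)]
  congr 1; ext1 p
  simp only [hF, map_sub, map_smul, Complex.real_smul]; ring

lemma hB_right (s : ℝ) (hs0 : 0 < s) (hs1 : s < 1) (f₁ f₂ g : ℝ[X]) (c : ℝ) :
    hB s g (c • f₁ - f₂) = c * hB s g f₁ - hB s g f₂ := by
  have I := hF_int s hs0 hs1
  unfold hB
  rw [← integral_const_mul, ← integral_sub ((I _ _).const_mul _) (I _ _)]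
  congr 1; ext1 p
  simp only [hF, map_sub, map_smul, Complex.real_smul, map_mul, Complex.conj_ofReal]; ring

lemma hB_adj (s : ℝ) (hs0 : 0 < s) (hs1 : s < 1) (f g : ℝ[X]) :
    (1 - s) * (2 * hB s (X * f) g - hB s (derivative f) g) = (1 + s) * hB s f (derivative g) ∧
    (1 - s) * (2 * hB s f (X * g) - hB s f (derivative g)) = (1 + s) * hB s (derivative f) g := by
  have hx := hB_x s hs0 hs1 f g
  have hy := hB_y s hs0 hs1 f g
  have hy := (mul_eq_zero.1 hy).resolve_left Complex.I_ne_zero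
  have hs : (s : ℂ) ≠ 0 := by exact_mod_cast hs0.ne'
  have hy2 : (1 - s) * (hB s (X * f) g - hB s f (X * g)) + s * (hB s (derivative f) g - hB s f (derivative g)) = 0 := by
    have := congrArg (fun t => (s : ℂ) * t) hy
    simp only [mul_zero] at this
    rw [← this]; field_simp
  constructor
  · linear_combination -hx + hy2
  · linear_combination -hx - hy2

lemma phys_succ (n : ℕ) : physHermite (n + 1) =
    (2 : ℝ) • (X * physHermite n) - derivative (physHermite n) := by
  rw [physHermite, mul_assoc, Polynomial.smul_eq_C_mul, show (C (2 : ℝ)) = 2 from rfl]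

lemma phys_deriv (n : ℕ) : derivative (physHermite (n + 1)) =
    (2 * (n + 1) : ℝ) • physHermite n := by
  induction n with
  | zero => simp [physHermite, Polynomial.smul_eq_C_mul, show (C (2 : ℝ)) = 2 from rfl]
  | succ n ih =>
    rw [phys_succ (n + 1), derivative_sub, derivative_smul, derivative_mul, ih, derivative_smul,
      phys_succ n]
    simp only [Polynomial.smul_eq_C_mul, derivative_X]
    push_cast
    simp only [C_mul, C_add, C_1]
    ring

lemma hB_zero_zero (s : ℝ) (hs0 : 0 < s) (hs1 : s < 1) :
    hB s 1 1 = (Real.pi * Real.sqrt s / (1 - s) : ℝ) := by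
  have h : ∀ p : ℝ × ℝ, hF s 1 1 p = ((Real.exp (-(1 - s) * p.1 ^ 2) * Real.exp (-(1 / s - 1) * p.2 ^ 2) : ℝ) : ℂ) := by
    intro p
    simp only [hF, hwt, map_one, mul_one]
    rw [← Real.exp_add]; congr 2; ring
  unfold hB
  simp_rw [h]
  rw [integral_complex_ofReal, Measure.volume_eq_prod,
    integral_prod_mul (fun x : ℝ => Real.exp (-(1 - s) * x ^ 2)) (fun x : ℝ => Real.exp (-(1 / s - 1) * x ^ 2)),
    integral_gaussian, integral_gaussian]
  congr 1
  have h1 : 0 < 1 - s := by linarith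
  rw [← Real.sqrt_mul (by positivity)]
  have : Real.pi / (1 - s) * (Real.pi / (1 / s - 1)) = (Real.pi / (1 - s)) ^ 2 * s := by
    have : (1 / s - 1) = (1 - s) / s := by field_simp
    rw [this]; field_simp
  rw [this, Real.sqrt_mul (by positivity), Real.sqrt_sq (by positivity)]
  ring

lemma hB_smul_right (s : ℝ) (f g : ℝ[X]) (c : ℝ) : hB s f (c • g) = c * hB s f g := by
  unfold hB
  rw [← integral_const_mul]
  congr 1; ext1 p
  simp only [hF, map_smul, Complex.real_smul, map_mul, Complex.conj_ofReal]; ring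

lemma hB_hermite (s : ℝ) (hs0 : 0 < s) (hs1 : s < 1) (n : ℕ) : ∀ m : ℕ,
    hB s (physHermite n) (physHermite m) = if n = m then (bn s n : ℂ) else 0 := by
  have h1 : (1 - s : ℂ) ≠ 0 := by
    have : (1 - s) ≠ 0 := by linarith
    exact_mod_cast this
  have hL0 (f : ℝ[X]) : hB s f 0 = 0 := by simp [hB, hF]
  have hR0 (f : ℝ[X]) : hB s 0 f = 0 := by simp [hB, hF]
  induction n with
  | zero =>
    intro m
    cases m with
    | zero =>
      simp only [physHermite, if_true]
      rw [hB_zero_zero s hs0 hs1]; simp [bn]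
    | succ m =>
      rw [phys_succ, hB_right s hs0 hs1]
      have := (hB_adj s hs0 hs1 (physHermite 0) (physHermite m)).2
      have h0 : derivative (physHermite 0) = 0 := by simp [physHermite]
      rw [h0, hR0, mul_zero] at this
      simpa [h1] using this
  | succ n ih =>
    intro m
    rw [phys_succ, hB_left s hs0 hs1]
    have := (hB_adj s hs0 hs1 (physHermite n) (physHermite m)).1
    refine mul_left_cancel₀ h1 ?_
    push_cast
    rw [this]
    cases m with
    | zero =>
      have h0 : derivative (physHermite 0) = 0 := by simp [physHermite]
      rw [h0, hL0]; simp
    | succ m =>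
      rw [phys_deriv, hB_smul_right, ih m]
      by_cases h : n = m
      · subst h
        simp only [if_true, bn, Nat.factorial_succ]
        push_cast
        rw [pow_succ]
        field_simp
      · simp [h]

/-- The imaginary unit. -/
noncomputable def hJ (u : Matrix.specialUnitaryGroup (Fin 2) ℂ) : ℍ[ℝ] := quatOf Complex.I u

lemma su_eqs (u : Matrix.specialUnitaryGroup (Fin 2) ℂ) :
    (u.1 * star u.1 = 1) ∧ (star u.1 * u.1 = 1) := by
  have h := (Matrix.mem_specialUnitaryGroup_iff.1 u.2).1
  exact ⟨Matrix.mem_unitaryGroup_iff.1 h, Matrix.mem_unitaryGroup_iff'.1 h⟩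

lemma repMat_eq (x y : ℝ) (u : Matrix.specialUnitaryGroup (Fin 2) ℂ) :
    repMat ((x : ℂ) + y * Complex.I) u = (x : ℂ) • 1 + (y : ℂ) • repMat Complex.I u := by
  unfold repMat
  have : Matrix.diagonal ![(x : ℂ) + y * Complex.I, (starRingEnd ℂ) ((x : ℂ) + y * Complex.I)]
      = (x : ℂ) • (1 : Matrix (Fin 2) (Fin 2) ℂ) + (y : ℂ) • Matrix.diagonal ![Complex.I, (starRingEnd ℂ) Complex.I] := by
    ext i j; fin_cases i <;> fin_cases j <;> simp
  rw [this, mul_add, add_mul, Matrix.mul_smul, Matrix.mul_smul, Matrix.smul_mul, Matrix.smul_mul, mul_one, (su_eqs u).1]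

lemma quatOf_eq (x y : ℝ) (u : Matrix.specialUnitaryGroup (Fin 2) ℂ) :
    quatOf ((x : ℂ) + y * Complex.I) u = x • (1 : ℍ[ℝ]) + y • hJ u := by
  have e1 (q : ℍ[ℝ]) : (x • (1 : ℍ[ℝ]) + y • q) = ⟨x + y * q.re, y * q.imI, y * q.imJ, y * q.imK⟩ := by
    ext <;> simp
  rw [e1]
  ext <;> simp [hJ, quatOf, repMat_eq]

lemma hJ_re (u : Matrix.specialUnitaryGroup (Fin 2) ℂ) : (hJ u).re = 0 := by
  simp only [hJ, quatOf, repMat, Matrix.mul_apply, Fin.sum_univ_two, Matrix.diagonal_apply, Matrix.star_apply]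
  simp
  ring

lemma hJ_norm (u : Matrix.specialUnitaryGroup (Fin 2) ℂ) :
    (hJ u).imI ^ 2 + (hJ u).imJ ^ 2 + (hJ u).imK ^ 2 = 1 := by
  have h : star (repMat Complex.I u) * repMat Complex.I u = 1 := by
    unfold repMat
    obtain ⟨h1, h2⟩ := su_eqs u
    have hd : star (Matrix.diagonal ![Complex.I, (starRingEnd ℂ) Complex.I]) * Matrix.diagonal ![Complex.I, (starRingEnd ℂ) Complex.I] = 1 := by
      ext i j; fin_cases i <;> fin_cases j <;> simp [Matrix.mul_apply, Fin.sum_univ_two, Matrix.star_apply]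
    set d := Matrix.diagonal ![Complex.I, (starRingEnd ℂ) Complex.I]
    set U := u.1
    calc star (U * d * star U) * (U * d * star U) = U * (star d * ((star U * U) * d)) * star U := by
          simp only [star_mul, star_star, mul_assoc]
      _ = 1 := by rw [h2, one_mul, hd, mul_one, h1]
  have h00 := congrArg Complex.re (congrFun (congrFun h 0) 0)
  have hr := hJ_re u
  simp only [hJ, quatOf] at hr ⊢
  simp [Matrix.mul_apply, Fin.sum_univ_two, Matrix.star_apply] at h00
  rw [hr] at h00
  linarith

lemma hJ_sq (u : Matrix.specialUnitaryGroup (Fin 2) ℂ) : hJ u * hJ u = -1 := by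
  have h := hJ_norm u
  have hr := hJ_re u
  ext <;> simp [hr] <;> linarith

lemma hJ_star (u : Matrix.specialUnitaryGroup (Fin 2) ℂ) : star (hJ u) = - hJ u := by
  ext <;> simp [hJ_re]

/-- The embedding of the complex numbers. -/
noncomputable def hphi (u : Matrix.specialUnitaryGroup (Fin 2) ℂ) : ℂ →ₐ[ℝ] ℍ[ℝ] :=
  Complex.liftAux (hJ u) (hJ_sq u)

lemma hphi_apply (u : Matrix.specialUnitaryGroup (Fin 2) ℂ) (z : ℂ) :
    hphi u z = z.re • (1 : ℍ[ℝ]) + z.im • hJ u := by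
  rw [hphi, Complex.liftAux_apply, Algebra.algebraMap_eq_smul_one]

lemma hphi_star (u : Matrix.specialUnitaryGroup (Fin 2) ℂ) (z : ℂ) :
    star (hphi u z) = hphi u ((starRingEnd ℂ) z) := by
  simp [hphi_apply, hJ_star]

lemma integrand_eq (s x y : ℝ) (f g : ℝ[X]) (u : Matrix.specialUnitaryGroup (Fin 2) ℂ) :
    Real.exp (-(1 - s) * x ^ 2 - (1 / s - 1) * y ^ 2) •
          (Polynomial.aeval (quatOf ((x : ℂ) + y * Complex.I) u) f *
            star (Polynomial.aeval (quatOf ((x : ℂ) + y * Complex.I) u) g))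
      = (hphi u).toLinearMap.toContinuousLinearMap (hF s f g (x, y)) := by
  have h : quatOf ((x : ℂ) + y * Complex.I) u = hphi u (zpt (x, y)) := by
    rw [quatOf_eq, hphi_apply]; simp [zpt]
  rw [h, aeval_algHom_apply, aeval_algHom_apply, hphi_star, ← map_mul, ← map_smul]
  simp [hF, hwt]

theorem quaternionicHermite_Hn_orthogonal
    (ω : Measure (Matrix.specialUnitaryGroup (Fin 2) ℂ))
    [IsProbabilityMeasure ω] [ω.IsMulLeftInvariant]
    (s : ℝ) (hs0 : 0 < s) (hs1 : s < 1) (n m : ℕ) :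
    (∫ u, (∫ x : ℝ, ∫ y : ℝ,
        Real.exp (-(1 - s) * x ^ 2 - (1 / s - 1) * y ^ 2) •
          (Polynomial.aeval (quatOf ((x : ℂ) + y * Complex.I) u) (physHermite n) *
            star (Polynomial.aeval (quatOf ((x : ℂ) + y * Complex.I) u) (physHermite m)))) ∂ω)
      = if n = m then bn s n • (1 : ℍ[ℝ]) else 0 := by
  have key : ∀ u : Matrix.specialUnitaryGroup (Fin 2) ℂ, (∫ x : ℝ, ∫ y : ℝ,
        Real.exp (-(1 - s) * x ^ 2 - (1 / s - 1) * y ^ 2) •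
          (Polynomial.aeval (quatOf ((x : ℂ) + y * Complex.I) u) (physHermite n) *
            star (Polynomial.aeval (quatOf ((x : ℂ) + y * Complex.I) u) (physHermite m))))
      = if n = m then bn s n • (1 : ℍ[ℝ]) else 0 := by
    intro u
    simp_rw [integrand_eq]
    have hi := hF_int s hs0 hs1 (physHermite n) (physHermite m)
    have hi2 := (hphi u).toLinearMap.toContinuousLinearMap.integrable_comp hi
    rw [Measure.volume_eq_prod] at hi2
    have e := integral_prod _ hi2
    rw [← e, ← Measure.volume_eq_prod, ContinuousLinearMap.integral_comp_comm _ hi]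
    have := hB_hermite s hs0 hs1 n m
    unfold hB at this
    rw [this]
    split_ifs
    · simp only [LinearMap.coe_toContinuousLinearMap', AlgHom.toLinearMap_apply, hphi_apply]
      simp only [Complex.ofReal_re, Complex.ofReal_im, zero_smul, add_zero]
    · simp
  simp_rw [key]
  simp
end
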